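/- arXiv:1704.01817 — 2 statements merged into one kernel-verified Lean document; each statement's English description precedes it below -/
import Mathlib

section
/- Triple product formula (Proposition 1.3, formula (Rfgh)): Let n ≥ 1 and let 𝐩 ∈ ℝ[x₁,…,xₙ]. Let W(𝐩) be the linear span of all partial derivatives ∂^α𝐩 for multi-indices α ∈ ℕⁿ (including α = 0), let ρ = dim W(𝐩), and let 𝐩₁,…,𝐩_ρ be a basis of W(𝐩) orthonormal with respect to the Fischer inner product. For 1 ≤ i,j,k ≤ ρ set a_{ijk} := Σ_{ℓ=1}^{ρ} (𝐩, 𝐩ᵢ·𝐩_ℓ)_F · (𝐩_ℓ, 𝐩ⱼ·𝐩ₖ)_F. Then for all smooth functions f, g, h : ℝⁿ → ℝ one has 𝐩(∂)(f·g·h) = Σ_{i=1}^{ρ} Σ_{j=1}^{ρ} Σ_{k=1}^{ρ} a_{ijk} · (𝐩ᵢ(∂)f)·(𝐩ⱼ(∂)g)·(𝐩ₖ(∂)h) pointwise on ℝⁿ. -/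
noncomputable section

open MvPolynomial

/-- Partial derivative of a function on `ℝⁿ` in the `i`-th coordinate direction. -/
def pderivFun {n : ℕ} (i : Fin n) (f : (Fin n → ℝ) → ℝ) : (Fin n → ℝ) → ℝ :=
  fun x => fderiv ℝ f x (Pi.single i 1)

/-- `∂^m`, the iterated partial derivative attached to the multi-index `m`. -/
def multiDerivFun {n : ℕ} (m : Fin n →₀ ℕ) (f : (Fin n → ℝ) → ℝ) : (Fin n → ℝ) → ℝ :=
  List.foldr (fun i g => (pderivFun i)^[m i] g) f (List.finRange n)

/-- `p(∂)`, the constant-coefficient differential operator attached to the polynomial `p`. -/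
def polDeriv {n : ℕ} (p : MvPolynomial (Fin n) ℝ) (f : (Fin n → ℝ) → ℝ) : (Fin n → ℝ) → ℝ :=
  fun x => ∑ m ∈ p.support, p.coeff m * multiDerivFun m f x

/-- `∂^m` acting on polynomials. -/
def polyMultiDeriv {n : ℕ} (m : Fin n →₀ ℕ) (p : MvPolynomial (Fin n) ℝ) :
    MvPolynomial (Fin n) ℝ :=
  List.foldr (fun i q => (fun r => MvPolynomial.pderiv i r)^[m i] q) p (List.finRange n)

/-- `q(∂)p`, as a polynomial. -/
def polyApply {n : ℕ} (q p : MvPolynomial (Fin n) ℝ) : MvPolynomial (Fin n) ℝ :=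
  ∑ m ∈ q.support, q.coeff m • polyMultiDeriv m p

/-- The Fischer inner product `(p,q)_F = (p(∂)q)(0)`. -/
def fischer {n : ℕ} (p q : MvPolynomial (Fin n) ℝ) : ℝ :=
  polDeriv p (fun x => MvPolynomial.eval x q) 0

/-- `W(p)`, the linear span of all partial derivatives `∂^α p` (including `p` itself). -/
def Wspace {n : ℕ} (p : MvPolynomial (Fin n) ℝ) : Submodule ℝ (MvPolynomial (Fin n) ℝ) :=
  Submodule.span ℝ (Set.range fun m : Fin n →₀ ℕ => polyMultiDeriv m p)

section Aux

open TensorProduct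

theorem fold_stable {A : Type*} {n : ℕ} (d : Fin n → A → A) (S : A → Prop)
    (hS : ∀ i f, S f → S (d i f)) (m : Fin n →₀ ℕ) (l : List (Fin n)) (f : A) (hf : S f) :
    S (List.foldr (fun i g => (d i)^[m i] g) f l) := by
  have hit : ∀ i k g, S g → S ((d i)^[k] g) := by
    intro i k
    induction k with
    | zero => intro g hg; simpa using hg
    | succ k ih => intro g hg; rw [Function.iterate_succ_apply]; exact ih _ (hS _ _ hg)
  induction l with
  | nil => simpa using hf
  | cons j l ih => rw [List.foldr_cons]; exact hit _ _ _ ih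

theorem iter_comm {A : Type*} {n : ℕ} (d : Fin n → A → A) (S : A → Prop)
    (hS : ∀ i f, S f → S (d i f)) (hc : ∀ i j f, S f → d i (d j f) = d j (d i f))
    (i j : Fin n) (k : ℕ) (f : A) (hf : S f) : (d j)^[k] (d i f) = d i ((d j)^[k] f) := by
  induction k generalizing f with
  | zero => rfl
  | succ k ih =>
    rw [Function.iterate_succ_apply, Function.iterate_succ_apply, hc _ _ _ hf, ih _ (hS _ _ hf)]

theorem fold_comm {A : Type*} {n : ℕ} (d : Fin n → A → A) (S : A → Prop)
    (hS : ∀ i f, S f → S (d i f)) (hc : ∀ i j f, S f → d i (d j f) = d j (d i f))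
    (i : Fin n) (m : Fin n →₀ ℕ) (l : List (Fin n)) (f : A) (hf : S f) :
    List.foldr (fun i g => (d i)^[m i] g) (d i f) l
      = d i (List.foldr (fun i g => (d i)^[m i] g) f l) := by
  induction l with
  | nil => rfl
  | cons j l ih =>
    rw [List.foldr_cons, List.foldr_cons, ih,
      iter_comm d S hS hc _ _ _ _ (fold_stable d S hS m l f hf)]

theorem fold_congr {A : Type*} {n : ℕ} (d : Fin n → A → A) (m m' : Fin n →₀ ℕ)
    (l : List (Fin n)) (f : A) (h : ∀ j ∈ l, m j = m' j) :
    List.foldr (fun i g => (d i)^[m i] g) f l = List.foldr (fun i g => (d i)^[m' i] g) f l := by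
  induction l with
  | nil => rfl
  | cons j l ih =>
    rw [List.foldr_cons, List.foldr_cons, ih (fun k hk => h k (List.mem_cons_of_mem _ hk)),
      h j List.mem_cons_self]

theorem fold_add {A : Type*} {n : ℕ} (d : Fin n → A → A) (S : A → Prop)
    (hS : ∀ i f, S f → S (d i f)) (hc : ∀ i j f, S f → d i (d j f) = d j (d i f))
    (i : Fin n) (m : Fin n →₀ ℕ) (l : List (Fin n)) (hl : l.Nodup) (hi : i ∈ l)
    (f : A) (hf : S f) :
    List.foldr (fun j g => (d j)^[(m + Finsupp.single i 1 : Fin n →₀ ℕ) j] g) f l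
      = d i (List.foldr (fun i g => (d i)^[m i] g) f l) := by
  induction l with
  | nil => simp at hi
  | cons j l ih =>
    rw [List.foldr_cons, List.foldr_cons]
    rw [List.nodup_cons] at hl
    by_cases hij : i = j
    · subst hij
      rw [fold_congr d (m + Finsupp.single i 1) m l f]
      · rw [← Function.iterate_succ_apply' (d i)]
        simp
      · intro k hk
        have : i ≠ k := fun h => hl.1 (h ▸ hk)
        simp [Finsupp.single_eq_of_ne' this]
    · have hil : i ∈ l := by
        rcases List.mem_cons.1 hi with h | h
        · exact absurd h hij
        · exact h
      rw [ih hl.2 hil, ← iter_comm d S hS hc _ _ _ _ (fold_stable d S hS m l f hf)]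
      simp [Finsupp.single_eq_of_ne' hij]

theorem pderiv_swap {n : ℕ} (i j : Fin n) (q : MvPolynomial (Fin n) ℝ) :
    pderiv i (pderiv j q) = pderiv j (pderiv i q) := by
  have h : ⁅(pderiv i : Derivation ℝ (MvPolynomial (Fin n) ℝ) (MvPolynomial (Fin n) ℝ)),
      (pderiv j : Derivation ℝ (MvPolynomial (Fin n) ℝ) (MvPolynomial (Fin n) ℝ))⁆ = 0 := by
    apply MvPolynomial.derivation_ext
    intro k
    rw [Derivation.commutator_apply]
    classical
    simp only [pderiv_X, Pi.single_apply]
    split_ifs <;> simp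
  have := congrArg (fun D => D q) h
  simp only [Derivation.commutator_apply] at this
  exact sub_eq_zero.1 this

theorem polyMultiDeriv_add {n : ℕ} (i : Fin n) (m : Fin n →₀ ℕ) (q : MvPolynomial (Fin n) ℝ) :
    polyMultiDeriv (m + Finsupp.single i 1) q = pderiv i (polyMultiDeriv m q) :=
  fold_add (fun i r => pderiv i r) (fun _ => True) (fun _ _ _ => trivial)
    (fun i j f _ => pderiv_swap i j f) i m _ (List.nodup_finRange n) (List.mem_finRange i) q trivial

theorem Wspace_pderiv {n : ℕ} (p : MvPolynomial (Fin n) ℝ) (i : Fin n)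
    (q : MvPolynomial (Fin n) ℝ) (hq : q ∈ Wspace p) : pderiv i q ∈ Wspace p := by
  unfold Wspace at hq ⊢
  induction hq using Submodule.span_induction with
  | mem x h =>
    obtain ⟨m, rfl⟩ := h
    exact Submodule.subset_span ⟨m + Finsupp.single i 1, polyMultiDeriv_add i m p⟩
  | zero => simp
  | add x y _ _ hx hy => rw [map_add]; exact add_mem hx hy
  | smul a x _ hx => rw [Derivation.map_smul]; exact Submodule.smul_mem _ _ hx

theorem self_mem_Wspace {n : ℕ} (p : MvPolynomial (Fin n) ℝ) : p ∈ Wspace p := by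
  refine Submodule.subset_span ⟨0, ?_⟩
  simp only [polyMultiDeriv, Finsupp.coe_zero, Pi.zero_apply, Function.iterate_zero, id]
  induction List.finRange n with
  | nil => rfl
  | cons j l ih => simpa using ih

/-- Smoothness. -/
def Smo {n : ℕ} (f : (Fin n → ℝ) → ℝ) : Prop := ContDiff ℝ (⊤ : ℕ∞) f

theorem Smo.pd {n : ℕ} (i : Fin n) (f : (Fin n → ℝ) → ℝ) (hf : Smo f) : Smo (pderivFun i f) := by
  unfold Smo pderivFun at *
  have h : ContDiff ℝ (⊤ : ℕ∞) (fderiv ℝ f) := hf.fderiv_right (by simp)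
  exact h.clm_apply contDiff_const

theorem pderivFun_swap {n : ℕ} (i j : Fin n) (f : (Fin n → ℝ) → ℝ) (hf : Smo f) :
    pderivFun i (pderivFun j f) = pderivFun j (pderivFun i f) := by
  funext x
  have h : ContDiff ℝ (⊤ : ℕ∞) (fderiv ℝ f) := ContDiff.fderiv_right hf (by simp)
  have hd : DifferentiableAt ℝ (fderiv ℝ f) x := (h.differentiable (by simp)).differentiableAt
  have key : ∀ v w : Fin n → ℝ, fderiv ℝ (fun y => fderiv ℝ f y v) x w
      = fderiv ℝ (fderiv ℝ f) x w v := by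
    intro v w
    rw [fderiv_clm_apply hd (by fun_prop)]
    simp
  unfold pderivFun
  rw [key, key]
  have hs : IsSymmSndFDerivAt ℝ f x :=
    (ContDiff.contDiffAt hf).isSymmSndFDerivAt (by
      simp only [minSmoothness_of_isRCLikeNormedField]
      exact WithTop.coe_le_coe.2 (le_top : (2 : ℕ∞) ≤ ⊤))
  exact hs _ _

theorem multiDerivFun_add {n : ℕ} (i : Fin n) (m : Fin n →₀ ℕ) (f : (Fin n → ℝ) → ℝ)
    (hf : Smo f) :
    multiDerivFun (m + Finsupp.single i 1) f = multiDerivFun m (pderivFun i f) :=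
  (fold_add pderivFun Smo Smo.pd pderivFun_swap i m _ (List.nodup_finRange n)
    (List.mem_finRange i) f hf).trans
    (fold_comm pderivFun Smo Smo.pd pderivFun_swap i m _ f hf).symm

theorem multiDerivFun_zero {n : ℕ} (f : (Fin n → ℝ) → ℝ) : multiDerivFun 0 f = f := by
  simp only [multiDerivFun, Finsupp.coe_zero, Pi.zero_apply, Function.iterate_zero, id]
  induction List.finRange n with
  | nil => rfl
  | cons j l ih => simpa using ih

theorem pderivFun_add {n : ℕ} (i : Fin n) (f g : (Fin n → ℝ) → ℝ) (hf : Smo f) (hg : Smo g) :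
    pderivFun i (f + g) = pderivFun i f + pderivFun i g := by
  funext x
  have h1 := (ContDiff.differentiable hf (by simp)).differentiableAt (x := x)
  have h2 := (ContDiff.differentiable hg (by simp)).differentiableAt (x := x)
  simp [pderivFun, fderiv_add h1 h2]

theorem pderivFun_mul {n : ℕ} (i : Fin n) (f g : (Fin n → ℝ) → ℝ) (hf : Smo f) (hg : Smo g) :
    pderivFun i (f * g) = pderivFun i f * g + f * pderivFun i g := by
  funext x
  have h1 := (ContDiff.differentiable hf (by simp)).differentiableAt (x := x)
  have h2 := (ContDiff.differentiable hg (by simp)).differentiableAt (x := x)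
  simp [pderivFun, fderiv_mul h1 h2]
  ring

/-- The functional `q ↦ (q(∂)f)(x)`. -/
def phi {n : ℕ} (f : (Fin n → ℝ) → ℝ) (x : Fin n → ℝ) : MvPolynomial (Fin n) ℝ →ₗ[ℝ] ℝ :=
  (basisMonomials (Fin n) ℝ).constr ℝ (fun m => multiDerivFun m f x)

theorem phi_apply {n : ℕ} (f : (Fin n → ℝ) → ℝ) (x : Fin n → ℝ) (q : MvPolynomial (Fin n) ℝ) :
    phi f x q = polDeriv q f x := by
  rw [phi, Module.Basis.constr_apply]
  rfl

theorem phi_monomial {n : ℕ} (f : (Fin n → ℝ) → ℝ) (x : Fin n → ℝ) (m : Fin n →₀ ℕ) :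
    phi f x (monomial m 1) = multiDerivFun m f x := by
  have := (basisMonomials (Fin n) ℝ).constr_basis ℝ (fun m => multiDerivFun m f x) m
  rwa [coe_basisMonomials] at this

theorem phi_mul_X {n : ℕ} (f : (Fin n → ℝ) → ℝ) (hf : Smo f) (x : Fin n → ℝ) (i : Fin n)
    (q : MvPolynomial (Fin n) ℝ) : phi f x (q * X i) = phi (pderivFun i f) x q := by
  have : phi f x ∘ₗ (LinearMap.mulRight ℝ (X i)) = phi (pderivFun i f) x := by
    apply (basisMonomials (Fin n) ℝ).ext
    intro m
    simp only [coe_basisMonomials, LinearMap.comp_apply, LinearMap.mulRight_apply]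
    rw [phi_monomial, ← multiDerivFun_add i m f hf, ← phi_monomial, X, monomial_mul, one_mul]
  exact congrArg (fun L => L q) this

theorem phi_C {n : ℕ} (f : (Fin n → ℝ) → ℝ) (x : Fin n → ℝ) (a : ℝ) :
    phi f x (C a) = a * f x := by
  have : (C a : MvPolynomial (Fin n) ℝ) = a • monomial 0 1 := by
    rw [smul_monomial, smul_eq_mul, mul_one]; rfl
  rw [this, map_smul, phi_monomial, multiDerivFun_zero, smul_eq_mul]

theorem phi_one {n : ℕ} (f : (Fin n → ℝ) → ℝ) (x : Fin n → ℝ) :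
    phi f x 1 = f x := by
  rw [← C_1, phi_C, one_mul]

theorem Smo.mul {n : ℕ} {f g : (Fin n → ℝ) → ℝ} (hf : Smo f) (hg : Smo g) : Smo (f * g) :=
  ContDiff.mul hf hg

theorem phi_add {n : ℕ} (f g : (Fin n → ℝ) → ℝ) (hf : Smo f) (hg : Smo g) (x : Fin n → ℝ)
    (q : MvPolynomial (Fin n) ℝ) : phi (f + g) x q = phi f x q + phi g x q := by
  induction q using MvPolynomial.induction_on generalizing f g with
  | C a => simp only [phi_C, Pi.add_apply]; ring
  | add p q hp hq => simp only [map_add, hp f g hf hg, hq f g hf hg]; ring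
  | mul_X p i hp =>
    have hfg : Smo (f + g) := ContDiff.add hf hg
    rw [phi_mul_X _ hfg, phi_mul_X _ hf, phi_mul_X _ hg, pderivFun_add _ _ _ hf hg,
      hp _ _ (hf.pd i) (hg.pd i)]

/-- Comultiplication. -/
def Del (n : ℕ) : MvPolynomial (Fin n) ℝ →ₐ[ℝ] MvPolynomial (Fin n) ℝ ⊗[ℝ] MvPolynomial (Fin n) ℝ :=
  aeval (fun i => X i ⊗ₜ 1 + 1 ⊗ₜ X i)

theorem Del_X {n : ℕ} (i : Fin n) : Del n (X i) = X i ⊗ₜ 1 + 1 ⊗ₜ X i := by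
  simp [Del]

/-- `φ ⊗ ψ`. -/
def tm {n : ℕ} (φ ψ : MvPolynomial (Fin n) ℝ →ₗ[ℝ] ℝ) :
    MvPolynomial (Fin n) ℝ ⊗[ℝ] MvPolynomial (Fin n) ℝ →ₗ[ℝ] ℝ :=
  LinearMap.mul' ℝ ℝ ∘ₗ TensorProduct.map φ ψ

theorem tm_tmul {n : ℕ} (φ ψ : MvPolynomial (Fin n) ℝ →ₗ[ℝ] ℝ) (u v : MvPolynomial (Fin n) ℝ) :
    tm φ ψ (u ⊗ₜ v) = φ u * ψ v := by
  simp [tm]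

theorem leib {n : ℕ} (f g : (Fin n → ℝ) → ℝ) (hf : Smo f) (hg : Smo g) (x : Fin n → ℝ)
    (q : MvPolynomial (Fin n) ℝ) : phi (f * g) x q = tm (phi f x) (phi g x) (Del n q) := by
  induction q using MvPolynomial.induction_on generalizing f g with
  | C a =>
    have : Del n (C a) = a • ((1 : MvPolynomial (Fin n) ℝ) ⊗ₜ[ℝ] (1 : MvPolynomial (Fin n) ℝ)) := by
      rw [← algebraMap_eq, AlgHom.commutes, Algebra.algebraMap_eq_smul_one]; rfl
    rw [this, map_smul, tm_tmul, phi_one, phi_one, phi_C]; rfl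
  | add p q hp hq => simp only [map_add, hp f g hf hg, hq f g hf hg]
  | mul_X p i hp =>
    rw [phi_mul_X _ (hf.mul hg), pderivFun_mul _ _ _ hf hg,
      phi_add _ _ ((hf.pd i).mul hg) (hf.mul (hg.pd i)), hp _ _ (hf.pd i) hg, hp _ _ hf (hg.pd i),
      map_mul, Del_X]
    induction Del n p using TensorProduct.induction_on with
    | zero => simp
    | tmul u v =>
      simp only [mul_add, Algebra.TensorProduct.tmul_mul_tmul, mul_one, map_add, tm_tmul,
        phi_mul_X _ hf, phi_mul_X _ hg]
    | add s t hs ht => rw [add_mul, map_add, map_add, map_add, ← hs, ← ht]; ring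

theorem Del_comm {n : ℕ} (q : MvPolynomial (Fin n) ℝ) :
    TensorProduct.comm ℝ _ _ (Del n q) = Del n q := by
  have : (Algebra.TensorProduct.comm ℝ (MvPolynomial (Fin n) ℝ) (MvPolynomial (Fin n) ℝ)).toAlgHom.comp
      (Del n) = Del n := by
    apply MvPolynomial.algHom_ext
    intro i
    simp [Del_X, add_comm]
  exact congrArg (fun L => L q) this

theorem Del_pderiv {n : ℕ} (i : Fin n) (q : MvPolynomial (Fin n) ℝ) :
    Del n (pderiv i q) = LinearMap.lTensor _ (pderiv i).toLinearMap (Del n q) := by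
  induction q using MvPolynomial.induction_on with
  | C a =>
    rw [← algebraMap_eq, AlgHom.commutes, Algebra.algebraMap_eq_smul_one]
    simp [Algebra.TensorProduct.one_def]
  | add p q hp hq => simp only [map_add, hp, hq]
  | mul_X p j hp =>
    rw [Derivation.leibniz, smul_eq_mul, smul_eq_mul, map_add, map_mul, map_mul, map_mul, hp, Del_X]
    have hX : Del n (pderiv i (X j)) = 1 ⊗ₜ pderiv i (X j) := by
      classical
      rw [pderiv_X, Pi.single_apply]
      split_ifs <;> simp [Algebra.TensorProduct.one_def]
    rw [hX]
    induction Del n p using TensorProduct.induction_on with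
    | zero => simp
    | tmul u v =>
      simp only [mul_add, add_mul, Algebra.TensorProduct.tmul_mul_tmul, mul_one, one_mul, map_add,
        LinearMap.lTensor_tmul, Derivation.coeFn_coe,
        Derivation.leibniz, smul_eq_mul, TensorProduct.tmul_add, mul_comm]
      abel
    | add s t hs ht =>
      rw [add_mul s t, add_mul s t, map_add, map_add, ← hs, ← ht]; ring

/-- Coefficient slices of the comultiplication. -/
def slice {n : ℕ} (m : Fin n →₀ ℕ) :
    MvPolynomial (Fin n) ℝ ⊗[ℝ] MvPolynomial (Fin n) ℝ →ₗ[ℝ] MvPolynomial (Fin n) ℝ :=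
  (TensorProduct.rid ℝ _).toLinearMap ∘ₗ LinearMap.lTensor _ ((basisMonomials (Fin n) ℝ).coord m)

theorem slice_tmul {n : ℕ} (m : Fin n →₀ ℕ) (u v : MvPolynomial (Fin n) ℝ) :
    slice m (u ⊗ₜ v) = coeff m v • u := by
  simp [slice]
  rfl

theorem slice_ext {n : ℕ} (s t : MvPolynomial (Fin n) ℝ ⊗[ℝ] MvPolynomial (Fin n) ℝ)
    (h : ∀ m, slice m s = slice m t) : s = t := by
  classical
  apply (TensorProduct.equivFinsuppOfBasisRight (basisMonomials (Fin n) ℝ)).injective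
  ext1 m
  rw [TensorProduct.equivFinsuppOfBasisRight_apply, TensorProduct.equivFinsuppOfBasisRight_apply]
  exact h m

theorem slice_zero_Del {n : ℕ} (q : MvPolynomial (Fin n) ℝ) : slice 0 (Del n q) = q := by
  induction q using MvPolynomial.induction_on with
  | C a =>
    rw [← algebraMap_eq, AlgHom.commutes, Algebra.algebraMap_eq_smul_one, map_smul,
      Algebra.TensorProduct.one_def, slice_tmul]
    simp [← C_mul']
  | add p q hp hq => simp only [map_add, hp, hq]
  | mul_X p i hp =>
    rw [map_mul, Del_X]
    conv_rhs => rw [← hp]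
    clear hp
    induction Del n p using TensorProduct.induction_on with
    | zero => simp
    | tmul u v =>
      have : coeff 0 (v * X i) = 0 := by classical simp [coeff_mul_X']
      simp [mul_add, slice_tmul, this]
    | add s t hs ht => rw [add_mul, map_add, map_add, hs, ht, add_mul]

theorem slice_lTensor {n : ℕ} (m : Fin n →₀ ℕ) (i : Fin n)
    (t : MvPolynomial (Fin n) ℝ ⊗[ℝ] MvPolynomial (Fin n) ℝ) :
    slice m (LinearMap.lTensor _ (pderiv i).toLinearMap t)
      = ((m i : ℝ) + 1) • slice (m + Finsupp.single i 1) t := by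
  induction t using TensorProduct.induction_on with
  | zero => simp
  | tmul u v =>
    simp [slice_tmul, coeff_pderiv, smul_smul, mul_comm]
  | add s t hs ht => simp only [map_add, hs, ht, smul_add]

theorem slice_Del_mem {n : ℕ} (W : Submodule ℝ (MvPolynomial (Fin n) ℝ))
    (hW : ∀ i, ∀ q ∈ W, pderiv i q ∈ W) (m : Fin n →₀ ℕ) :
    ∀ q ∈ W, slice m (Del n q) ∈ W := by
  suffices H : ∀ k : ℕ, ∀ m : Fin n →₀ ℕ, m.degree = k → ∀ q ∈ W, slice m (Del n q) ∈ W from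
    H _ m rfl
  intro k
  induction k with
  | zero =>
    intro m hm q hq
    rw [(Finsupp.degree_eq_zero_iff m).1 hm, slice_zero_Del]
    exact hq
  | succ k ih =>
    intro m hm q hq
    have hne : m ≠ 0 := by rintro rfl; simp at hm
    obtain ⟨i, hi⟩ := Finsupp.ne_iff.1 hne
    have hle : Finsupp.single i 1 ≤ m := by
      rw [Finsupp.single_le_iff]; exact Nat.one_le_iff_ne_zero.2 hi
    have hm' : m - Finsupp.single i 1 + Finsupp.single i 1 = m := tsub_add_cancel_of_le hle
    generalize m - Finsupp.single i 1 = m' at hm'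
    subst hm'
    have hd : m'.degree = k := by
      rw [map_add, Finsupp.degree_single] at hm; omega
    have h := ih m' hd _ (hW i q hq)
    rw [Del_pderiv, slice_lTensor] at h
    have hpos : ((m' i : ℝ) + 1) ≠ 0 := by positivity
    exact (Submodule.smul_mem_iff _ hpos).1 h

theorem Del_eq {n : ℕ} (W : Submodule ℝ (MvPolynomial (Fin n) ℝ))
    (hW : ∀ i, ∀ q ∈ W, pderiv i q ∈ W) (π : MvPolynomial (Fin n) ℝ →ₗ[ℝ] MvPolynomial (Fin n) ℝ)
    (hπ : ∀ q ∈ W, π q = q) (q : MvPolynomial (Fin n) ℝ) (hq : q ∈ W) :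
    TensorProduct.map π π (Del n q) = Del n q := by
  have h1 : LinearMap.rTensor _ π (Del n q) = Del n q := by
    apply slice_ext
    intro m
    have : ∀ t, slice m (LinearMap.rTensor _ π t) = π (slice m t) := by
      intro t
      induction t using TensorProduct.induction_on with
      | zero => simp
      | tmul u v => simp [slice_tmul]
      | add s t hs ht => simp only [map_add, hs, ht]
    rw [this]
    exact hπ _ (slice_Del_mem W hW m q hq)
  have h2 : LinearMap.lTensor _ π (Del n q) = Del n q := by
    have : ∀ t : MvPolynomial (Fin n) ℝ ⊗[ℝ] MvPolynomial (Fin n) ℝ,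
        LinearMap.lTensor (MvPolynomial (Fin n) ℝ) π (TensorProduct.comm ℝ _ _ t)
        = TensorProduct.comm ℝ _ _ (LinearMap.rTensor (MvPolynomial (Fin n) ℝ) π t) := by
      intro t
      induction t using TensorProduct.induction_on with
      | zero => simp
      | tmul u v => simp
      | add s t hs ht => simp only [map_add, hs, ht]
    have h := this (Del n q)
    rwa [h1, Del_comm] at h
  have h3 : TensorProduct.map π π (Del n q)
      = LinearMap.lTensor _ π (LinearMap.rTensor _ π (Del n q)) := by
    rw [← LinearMap.comp_apply, LinearMap.lTensor_comp_rTensor]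
  rw [h3, h1, h2]

theorem double {n ρ : ℕ} (W : Submodule ℝ (MvPolynomial (Fin n) ℝ))
    (hW : ∀ i, ∀ q ∈ W, pderiv i q ∈ W) (b : Fin ρ → MvPolynomial (Fin n) ℝ)
    (hbspan : W ≤ Submodule.span ℝ (Set.range b))
    (hborth : ∀ i j, fischer (b i) (b j) = if i = j then 1 else 0)
    (q : MvPolynomial (Fin n) ℝ) (hq : q ∈ W)
    (f g : (Fin n → ℝ) → ℝ) (hf : Smo f) (hg : Smo g) (x : Fin n → ℝ) :
    polDeriv q (f * g) x
      = ∑ i, ∑ j, fischer q (b i * b j) * (polDeriv (b i) f x * polDeriv (b j) g x) := by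
  let e : Fin ρ → (Fin n → ℝ) → ℝ := fun i y => eval y (b i)
  have he : ∀ i, Smo (e i) := by
    intro i
    show ContDiff ℝ (⊤ : ℕ∞) (fun y => eval y (b i))
    induction b i using MvPolynomial.induction_on with
    | C a => simpa using contDiff_const
    | add p q hp hq => simpa using hp.add hq
    | mul_X p i hp => simpa using hp.mul (contDiff_apply ℝ ℝ i)
  have hfe : ∀ r i, fischer r (b i) = phi (e i) 0 r := fun r i => (phi_apply _ _ _).symm
  have hfee : ∀ r i j, fischer r (b i * b j) = phi (e i * e j) 0 r := by
    intro r i j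
    rw [phi_apply, fischer]
    congr 1
    funext y
    simp [e]
  let π : MvPolynomial (Fin n) ℝ →ₗ[ℝ] MvPolynomial (Fin n) ℝ :=
    ∑ i, (phi (e i) 0).smulRight (b i)
  have hπa : ∀ r, π r = ∑ i, phi (e i) 0 r • b i := by
    intro r; simp [π]
  have hπ : ∀ r ∈ W, π r = r := by
    intro r hr
    have hr' := hbspan hr
    clear hr
    induction hr' using Submodule.span_induction with
    | mem x h =>
      obtain ⟨k, rfl⟩ := h
      rw [hπa]
      simp [← hfe, hborth]
    | zero => simp
    | add x y _ _ hx hy => rw [map_add, hx, hy]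
    | smul a x _ hx => rw [map_smul, hx]
  have hmap : ∀ t, TensorProduct.map π π t
      = ∑ i, ∑ j, tm (phi (e i) 0) (phi (e j) 0) t • (b i ⊗ₜ[ℝ] b j) := by
    intro t
    induction t using TensorProduct.induction_on with
    | zero => simp
    | tmul u v =>
      rw [TensorProduct.map_tmul, hπa, hπa, TensorProduct.sum_tmul]
      refine Finset.sum_congr rfl fun i _ => ?_
      rw [TensorProduct.tmul_sum]
      refine Finset.sum_congr rfl fun j _ => ?_
      rw [tm_tmul, TensorProduct.smul_tmul_smul]
    | add s t hs ht => simp only [map_add, hs, ht, add_smul, Finset.sum_add_distrib]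
  rw [← phi_apply, leib f g hf hg, ← Del_eq W hW π hπ q hq, hmap]
  simp only [map_sum, map_smul, tm_tmul, smul_eq_mul, phi_apply]
  simp only [hfee, leib _ _ (he _) (he _)]

end Aux

/-- Triple product formula. -/
theorem generalized_leibniz_triple_product
    (n : ℕ) (hn : 1 ≤ n) (p : MvPolynomial (Fin n) ℝ)
    (ρ : ℕ) (hρ : ρ = Module.finrank ℝ (Wspace p))
    (b : Fin ρ → MvPolynomial (Fin n) ℝ)
    (hbmem : ∀ j, b j ∈ Wspace p)
    (hbspan : Wspace p ≤ Submodule.span ℝ (Set.range b))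
    (hborth : ∀ i j, fischer (b i) (b j) = if i = j then 1 else 0)
    (a : Fin ρ → Fin ρ → Fin ρ → ℝ)
    (ha : ∀ i j k, a i j k = ∑ l : Fin ρ, fischer p (b i * b l) * fischer (b l) (b j * b k))
    (f g h : (Fin n → ℝ) → ℝ)
    (hf : ContDiff ℝ (⊤ : ℕ∞) f) (hg : ContDiff ℝ (⊤ : ℕ∞) g) (hh : ContDiff ℝ (⊤ : ℕ∞) h)
    (x : Fin n → ℝ) :
    polDeriv p (fun y => f y * g y * h y) x
      = ∑ i : Fin ρ, ∑ j : Fin ρ, ∑ k : Fin ρ,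
          a i j k * (polDeriv (b i) f x * (polDeriv (b j) g x * polDeriv (b k) h x)) := by
  have hW := Wspace_pderiv p
  have hgh : Smo (g * h) := Smo.mul hg hh
  have h1 : (fun y => f y * g y * h y) = f * (g * h) := by
    funext y; simp [mul_assoc]
  rw [h1, double (Wspace p) hW b hbspan hborth p (self_mem_Wspace p) f (g * h) hf hgh x]
  refine Finset.sum_congr rfl fun i _ => ?_
  have h2 : ∀ l, polDeriv (b l) (g * h) x = _ := fun l =>
    double (Wspace p) hW b hbspan hborth (b l) (hbmem l) g h hg hh x
  simp only [h2, ha, Finset.mul_sum, Finset.sum_mul]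
  rw [Finset.sum_comm]
  refine Finset.sum_congr rfl fun j _ => ?_
  rw [Finset.sum_comm]
  refine Finset.sum_congr rfl fun k _ => ?_
  refine Finset.sum_congr rfl fun l _ => ?_
  ring
end
end

section
/- Normal form of the operator E_{s,t} for V = ℝ^{p,q} (content of Proposition 8.3): Let s, t ∈ ℂ. For every smooth complex-valued function f on ℝⁿ×ℝⁿ, the following identity holds pointwise on ℝⁿ×ℝⁿ: −P(∂/∂x)P(∂/∂y)[ P(x−y)·f ] + 4s·P(∂/∂y)[ Σ_{i=1}^{n} ∂/∂xᵢ( (xᵢ−yᵢ)·f ) ] + 4t·P(∂/∂x)[ Σ_{i=1}^{n} ∂/∂yᵢ( (yᵢ−xᵢ)·f ) ] − 2t(2t−2+n)·P(∂/∂x)f + 8st·P(∂/∂x, ∂/∂y)f − 2s(2s−2+n)·P(∂/∂y)f = −P(x−y)·P(∂/∂x)P(∂/∂y)f + 4(s−1)·Σ_{j=1}^{n} (xⱼ−yⱼ)·∂/∂xⱼ( P(∂/∂y)f ) + 4(t−1)·Σ_{j=1}^{n} (yⱼ−xⱼ)·∂/∂yⱼ( P(∂/∂x)f ) − 2(s−1)(2s−n)·P(∂/∂y)f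 + 8(s−1)(t−1)·P(∂/∂x, ∂/∂y)f − 2(t−1)(2t−n)·P(∂/∂x)f. -/
noncomputable section

/-- `εᵢ`: the sign of the `i`-th coordinate for the quadratic form of signature `(p,q)`. -/
def sgn (p : ℕ) {n : ℕ} (i : Fin n) : ℝ := if (i : ℕ) < p then 1 else -1

/-- The quadratic form `P(x) = x₁²+⋯+x_p² − x_{p+1}²−⋯−x_n²` on `ℝⁿ`, `n = p+q`. -/
def Pform (p : ℕ) {n : ℕ} (x : Fin n → ℝ) : ℝ := ∑ i, sgn p i * x i ^ 2

/-- The associated symmetric bilinear form `P(x,y) = Σ_{i≤p} xᵢyᵢ − Σ_{i>p} xᵢyᵢ`. -/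
def Pbil (p : ℕ) {n : ℕ} (x y : Fin n → ℝ) : ℝ := ∑ i, sgn p i * x i * y i

/-- Signed power `t^{s,ε}`: `t^{s,+} = |t|^s = exp(s·log|t|)` and `t^{s,−} = sign(t)·|t|^s`. -/
def sPow (ε : Bool) (s : ℂ) (t : ℝ) : ℂ :=
  (if ε then 1 else (Real.sign t : ℂ)) * Complex.exp (s * (Real.log |t| : ℂ))

/-- Partial derivative `∂/∂xᵢ` (first variable) of a function on `ℝⁿ×ℝⁿ`. -/
def pdx {n : ℕ} (i : Fin n) (f : (Fin n → ℝ) × (Fin n → ℝ) → ℂ) :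
    (Fin n → ℝ) × (Fin n → ℝ) → ℂ :=
  fun z => fderiv ℝ f z (Pi.single i 1, 0)

/-- Partial derivative `∂/∂yᵢ` (second variable) of a function on `ℝⁿ×ℝⁿ`. -/
def pdy {n : ℕ} (i : Fin n) (f : (Fin n → ℝ) × (Fin n → ℝ) → ℂ) :
    (Fin n → ℝ) × (Fin n → ℝ) → ℂ :=
  fun z => fderiv ℝ f z (0, Pi.single i 1)

/-- `P(∂/∂x) = Σᵢ εᵢ ∂²/∂xᵢ²`. -/
def Px (p : ℕ) {n : ℕ} (f : (Fin n → ℝ) × (Fin n → ℝ) → ℂ) :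
    (Fin n → ℝ) × (Fin n → ℝ) → ℂ :=
  fun z => ∑ i, (sgn p i : ℂ) * pdx i (pdx i f) z

/-- `P(∂/∂y) = Σᵢ εᵢ ∂²/∂yᵢ²`. -/
def Py (p : ℕ) {n : ℕ} (f : (Fin n → ℝ) × (Fin n → ℝ) → ℂ) :
    (Fin n → ℝ) × (Fin n → ℝ) → ℂ :=
  fun z => ∑ i, (sgn p i : ℂ) * pdy i (pdy i f) z

/-- `P(∂/∂x, ∂/∂y) = Σᵢ εᵢ ∂²/∂xᵢ∂yᵢ`. -/
def Pxy (p : ℕ) {n : ℕ} (f : (Fin n → ℝ) × (Fin n → ℝ) → ℂ) :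
    (Fin n → ℝ) × (Fin n → ℝ) → ℂ :=
  fun z => ∑ i, (sgn p i : ℂ) * pdx i (pdy i f) z


/-! ### Helper material -/

abbrev EE (n : ℕ) := (Fin n → ℝ) × (Fin n → ℝ)

/-- Directional derivative. -/
def dd {n : ℕ} (v : EE n) (f : EE n → ℂ) : EE n → ℂ := fun z => fderiv ℝ f z v

/-- Smoothness. -/
def Sm {n : ℕ} (f : EE n → ℂ) : Prop := ContDiff ℝ (⊤ : ℕ∞) f

/-- Coordinate of the difference. -/
def uu {n : ℕ} (j : Fin n) : EE n → ℂ := fun w => ((w.1 j - w.2 j : ℝ) : ℂ)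

theorem Sm.diff {n : ℕ} {f : EE n → ℂ} (hf : Sm f) : Differentiable ℝ f :=
  ContDiff.differentiable hf (by simp)

theorem Sm.dd {n : ℕ} {f : EE n → ℂ} (hf : Sm f) (v : EE n) : Sm (dd v f) := by
  unfold Sm _root_.dd at *
  exact (hf.fderiv_right (m := (⊤ : ℕ∞)) (by simp)).clm_apply contDiff_const

theorem Sm.mul {n : ℕ} {f g : EE n → ℂ} (hf : Sm f) (hg : Sm g) : Sm (fun w => f w * g w) :=
  ContDiff.mul hf hg

theorem Sm.add {n : ℕ} {f g : EE n → ℂ} (hf : Sm f) (hg : Sm g) : Sm (fun w => f w + g w) :=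
  ContDiff.add hf hg

theorem Sm.const {n : ℕ} (c : ℂ) : Sm (fun _ : EE n => c) := contDiff_const

theorem Sm.sum {n m : ℕ} {f : Fin m → EE n → ℂ} (hf : ∀ i, Sm (f i)) :
    Sm (fun w => ∑ i, f i w) :=
  ContDiff.sum (fun i _ => hf i)

theorem Sm.uu {n : ℕ} (j : Fin n) : Sm (uu j) := by
  unfold Sm _root_.uu
  have h : ContDiff ℝ (⊤ : ℕ∞) (fun w : EE n => w.1 j - w.2 j) := by fun_prop
  exact Complex.ofRealCLM.contDiff.comp h

theorem dd_add {n : ℕ} (v : EE n) {f g : EE n → ℂ} (hf : Sm f) (hg : Sm g) :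
    dd v (fun w => f w + g w) = fun w => dd v f w + dd v g w := by
  funext z
  simp only [dd]
  rw [fderiv_fun_add (hf.diff z) (hg.diff z)]
  rfl

theorem dd_cmul {n : ℕ} (v : EE n) (c : ℂ) {f : EE n → ℂ} (hf : Sm f) :
    dd v (fun w => c * f w) = fun w => c * dd v f w := by
  funext z
  simp only [dd]
  rw [fderiv_const_mul (hf.diff z)]
  rfl

theorem dd_sum {n m : ℕ} (v : EE n) {f : Fin m → EE n → ℂ} (hf : ∀ i, Sm (f i)) :
    dd v (fun w => ∑ i, f i w) = fun w => ∑ i, dd v (f i) w := by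
  funext z
  simp only [dd]
  rw [fderiv_fun_sum (fun i _ => (hf i).diff z)]
  simp

theorem dd_comm {n : ℕ} (v v' : EE n) {f : EE n → ℂ} (hf : Sm f) :
    dd v (dd v' f) = dd v' (dd v f) := by
  funext z
  have h2 : Differentiable ℝ (fderiv ℝ f) :=
    (ContDiff.fderiv_right (m := (⊤ : ℕ∞)) hf (by simp)).differentiable (by simp)
  have key : ∀ a b : EE n, dd a (dd b f) z = fderiv ℝ (fderiv ℝ f) z a b := by
    intro a b
    change fderiv ℝ (fun y => fderiv ℝ f y b) z a = _
    rw [fderiv_clm_apply (h2 z) (differentiableAt_const b)]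
    simp
  rw [key, key]
  have hs : IsSymmSndFDerivAt ℝ f z :=
    (ContDiff.contDiffAt hf).isSymmSndFDerivAt (by
      rw [minSmoothness_of_isRCLikeNormedField]
      exact WithTop.coe_le_coe.2 (le_top : (2 : ℕ∞) ≤ ⊤))
  exact hs.eq v v'

theorem dd_uu {n : ℕ} (v : EE n) (j : Fin n) {f : EE n → ℂ} (hf : Sm f) :
    dd v (fun w => uu j w * f w)
      = fun w => uu j w * dd v f w + ((v.1 j - v.2 j : ℝ) : ℂ) * f w := by
  funext z
  have hu : fderiv ℝ (uu j) z v = ((v.1 j - v.2 j : ℝ) : ℂ) := by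
    have : uu j = (Complex.ofRealCLM.comp
        (((ContinuousLinearMap.proj (R := ℝ) (φ := fun _ : Fin n => ℝ) j).comp
          (ContinuousLinearMap.fst ℝ (Fin n → ℝ) (Fin n → ℝ)))
        - ((ContinuousLinearMap.proj (R := ℝ) (φ := fun _ : Fin n => ℝ) j).comp
          (ContinuousLinearMap.snd ℝ (Fin n → ℝ) (Fin n → ℝ)))) : EE n → ℂ) := by
      funext w
      simp [uu]
    rw [this, ContinuousLinearMap.fderiv]
    simp
  simp only [dd]
  rw [fderiv_fun_mul ((Sm.uu j).diff z) (hf.diff z)]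
  simp [hu]
  ring

/-- Second order operator. -/
def LL {n : ℕ} (ε : Fin n → ℂ) (e : Fin n → EE n) (f : EE n → ℂ) : EE n → ℂ :=
  fun z => ∑ i, ε i * dd (e i) (dd (e i) f) z

theorem Sm.LL {n : ℕ} {f : EE n → ℂ} (hf : Sm f) (ε : Fin n → ℂ) (e : Fin n → EE n) :
    Sm (LL ε e f) :=
  Sm.sum (fun i => (Sm.const _).mul ((hf.dd _).dd _))

theorem LL_add {n : ℕ} (ε : Fin n → ℂ) (e : Fin n → EE n) {f g : EE n → ℂ}
    (hf : Sm f) (hg : Sm g) :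
    LL ε e (fun w => f w + g w) = fun w => LL ε e f w + LL ε e g w := by
  funext z
  simp only [LL, dd_add _ hf hg, dd_add _ (hf.dd _) (hg.dd _), mul_add, Finset.sum_add_distrib]

theorem LL_cmul {n : ℕ} (ε : Fin n → ℂ) (e : Fin n → EE n) (c : ℂ) {f : EE n → ℂ}
    (hf : Sm f) :
    LL ε e (fun w => c * f w) = fun w => c * LL ε e f w := by
  funext z
  simp only [LL, dd_cmul _ c hf, dd_cmul _ c (hf.dd _), Finset.mul_sum]
  exact Finset.sum_congr rfl (fun i _ => by ring)

theorem LL_sum {n m : ℕ} (ε : Fin n → ℂ) (e : Fin n → EE n) {f : Fin m → EE n → ℂ}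
    (hf : ∀ i, Sm (f i)) :
    LL ε e (fun w => ∑ i, f i w) = fun w => ∑ i, LL ε e (f i) w := by
  funext z
  simp only [LL, dd_sum _ hf, dd_sum _ (fun i => (hf i).dd _), Finset.mul_sum]
  exact Finset.sum_comm

theorem LL_dd {n : ℕ} (ε : Fin n → ℂ) (e : Fin n → EE n) (v : EE n) {f : EE n → ℂ}
    (hf : Sm f) : LL ε e (dd v f) = dd v (LL ε e f) := by
  unfold LL
  rw [dd_sum _ (fun i => (Sm.const _).mul ((hf.dd _).dd _))]
  funext z
  refine Finset.sum_congr rfl (fun i _ => ?_)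
  rw [dd_cmul _ _ ((hf.dd _).dd _), dd_comm v _ (hf.dd _), dd_comm v _ hf]

theorem LL_uu {n : ℕ} (ε : Fin n → ℂ) (e : Fin n → EE n) (κ : ℂ)
    (he : ∀ i j, (((e i).1 j - (e i).2 j : ℝ) : ℂ) = if i = j then κ else 0)
    (j : Fin n) {f : EE n → ℂ} (hf : Sm f) :
    LL ε e (fun w => uu j w * f w)
      = fun w => uu j w * LL ε e f w + 2 * κ * ε j * dd (e j) f w := by
  funext z
  have h : ∀ i, ε i * dd (e i) (dd (e i) (fun w => uu j w * f w)) z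
      = uu j z * (ε i * dd (e i) (dd (e i) f) z)
        + if i = j then 2 * κ * ε j * dd (e j) f z else 0 := by
    intro i
    rw [dd_uu _ j hf, dd_add _ ((Sm.uu j).mul (hf.dd _)) ((Sm.const _).mul hf),
      dd_uu _ j (hf.dd _), dd_cmul _ _ hf]
    simp only [he]
    split_ifs with hij
    · subst hij; ring
    · ring
  simp only [LL, h, Finset.sum_add_distrib, Finset.mul_sum, Finset.sum_ite_eq',
    Finset.sum_ite_eq, Finset.mem_univ, if_true]

theorem LL_P {n : ℕ} (ε : Fin n → ℂ) (hε : ∀ i, ε i * ε i = 1) (e : Fin n → EE n) (κ : ℂ)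
    (hκ : κ * κ = 1)
    (he : ∀ i j, (((e i).1 j - (e i).2 j : ℝ) : ℂ) = if i = j then κ else 0)
    {f : EE n → ℂ} (hf : Sm f) :
    LL ε e (fun w => ∑ j, ε j * (uu j w * (uu j w * f w)))
      = fun w => (∑ j, ε j * (uu j w * (uu j w * LL ε e f w)))
        + 4 * κ * (∑ j, uu j w * dd (e j) f w) + 2 * (n : ℂ) * f w := by
  have h1 : ∀ j, Sm (fun w => uu j w * f w) := fun j => (Sm.uu j).mul hf
  have h2 : ∀ j, Sm (fun w => uu j w * (uu j w * f w)) := fun j => (Sm.uu j).mul (h1 j)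
  rw [LL_sum _ _ (fun j => (Sm.const (ε j)).mul (h2 j))]
  funext z
  have hterm : ∀ j, LL ε e (fun w => ε j * (uu j w * (uu j w * f w))) z
      = ε j * (uu j z * (uu j z * LL ε e f z)) + 4 * κ * (uu j z * dd (e j) f z)
        + 2 * f z := by
    intro j
    rw [LL_cmul _ _ _ (h2 j), LL_uu ε e κ he j (h1 j), LL_uu ε e κ he j hf, dd_uu _ j hf]
    simp only [he, if_true]
    linear_combination (4 * κ * uu j z * dd (e j) f z + 2 * κ * κ * f z) * hε j + 2 * f z * hκ
  simp only [hterm, Finset.sum_add_distrib, Finset.mul_sum]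
  simp
  ring

theorem sgn_sq' (p : ℕ) {n : ℕ} (i : Fin n) : (sgn p i : ℂ) * (sgn p i : ℂ) = 1 := by
  unfold sgn
  split_ifs <;> simp

/-- Normal form of the operator `E_{s,t}` for `V = ℝ^{p,q}` (Proposition 8.3). -/
theorem normal_form_Est_Rpq (p q : ℕ) (hp : 1 ≤ p) (n : ℕ) (hn : n = p + q)
    (s t : ℂ) (f : (Fin n → ℝ) × (Fin n → ℝ) → ℂ) (hf : ContDiff ℝ (⊤ : ℕ∞) f)
    (z : (Fin n → ℝ) × (Fin n → ℝ)) :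
    -(Px p (Py p (fun w => (Pform p (w.1 - w.2) : ℂ) * f w)) z)
      + 4 * s * Py p (fun w => ∑ i, pdx i (fun u => ((u.1 i - u.2 i : ℝ) : ℂ) * f u) w) z
      + 4 * t * Px p (fun w => ∑ i, pdy i (fun u => ((u.2 i - u.1 i : ℝ) : ℂ) * f u) w) z
      - 2 * t * (2 * t - 2 + (n : ℂ)) * Px p f z
      + 8 * s * t * Pxy p f z
      - 2 * s * (2 * s - 2 + (n : ℂ)) * Py p f z
    =
    -((Pform p (z.1 - z.2) : ℂ) * Px p (Py p f) z)
      + 4 * (s - 1) * ∑ j, ((z.1 j - z.2 j : ℝ) : ℂ) * pdx j (Py p f) z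
      + 4 * (t - 1) * ∑ j, ((z.2 j - z.1 j : ℝ) : ℂ) * pdy j (Px p f) z
      - 2 * (s - 1) * (2 * s - (n : ℂ)) * Py p f z
      + 8 * (s - 1) * (t - 1) * Pxy p f z
      - 2 * (t - 1) * (2 * t - (n : ℂ)) * Px p f z := by
  have hf' : Sm f := hf
  set ε : Fin n → ℂ := fun i => (sgn p i : ℂ) with hεd
  have hε : ∀ i, ε i * ε i = 1 := fun i => sgn_sq' p i
  set ex : Fin n → EE n := fun i => (Pi.single i 1, 0) with hex
  set ey : Fin n → EE n := fun i => (0, Pi.single i 1) with hey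
  have hx : ∀ i j, (((ex i).1 j - (ex i).2 j : ℝ) : ℂ) = if i = j then 1 else 0 := by
    intro i j
    by_cases h : i = j
    · subst h; simp [hex]
    · simp [hex, h, Pi.single_apply, Ne.symm h]
  have hy : ∀ i j, (((ey i).1 j - (ey i).2 j : ℝ) : ℂ) = if i = j then -1 else 0 := by
    intro i j
    by_cases h : i = j
    · subst h; simp [hey]
    · simp [hey, h, Pi.single_apply, Ne.symm h]
  have ePx : ∀ g : EE n → ℂ, Px p g = LL ε ex g := fun g => rfl
  have ePy : ∀ g : EE n → ℂ, Py p g = LL ε ey g := fun g => rfl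
  have epx : ∀ i (g : EE n → ℂ), pdx i g = dd (ex i) g := fun i g => rfl
  have epy : ∀ i (g : EE n → ℂ), pdy i g = dd (ey i) g := fun i g => rfl
  have eP : ∀ (g : ℂ) (w : EE n), (Pform p (w.1 - w.2) : ℂ) * g
      = ∑ j, ε j * (uu j w * (uu j w * g)) := by
    intro g w
    simp only [Pform, Complex.ofReal_sum, Finset.sum_mul]
    refine Finset.sum_congr rfl (fun j _ => ?_)
    simp only [hεd, uu, Pi.sub_apply]
    push_cast
    ring
  have eu : ∀ j (w : EE n), ((w.1 j - w.2 j : ℝ) : ℂ) = uu j w := fun j w => rfl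
  have eu' : ∀ j (w : EE n), ((w.2 j - w.1 j : ℝ) : ℂ) = -1 * uu j w := by
    intro j w
    simp only [uu]
    push_cast
    ring
  have ePxy : Pxy p f z = ∑ i, ε i * dd (ex i) (dd (ey i) f) z := rfl
  simp only [eP, eu, eu', ePx, ePy, epx, epy, ePxy, mul_assoc (-1 : ℂ)]
  have sN : Sm (LL ε ey f) := hf'.LL _ _
  have sM : Sm (LL ε ex f) := hf'.LL _ _
  -- first term
  have T1 : LL ε ex (LL ε ey (fun w => ∑ j, ε j * (uu j w * (uu j w * f w)))) z
      = (∑ j, ε j * (uu j z * (uu j z * LL ε ex (LL ε ey f) z)))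
        + 4 * (∑ j, uu j z * dd (ex j) (LL ε ey f) z) + 2 * (n : ℂ) * LL ε ey f z
        - 4 * (∑ j, uu j z * dd (ey j) (LL ε ex f) z)
        - 8 * (∑ j, ε j * dd (ex j) (dd (ey j) f) z)
        + 2 * (n : ℂ) * LL ε ex f z := by
    rw [LL_P ε hε ey (-1) (by ring) hy hf']
    have sA : Sm (fun w => ∑ j, ε j * (uu j w * (uu j w * LL ε ey f w))) :=
      Sm.sum (fun j => (Sm.const _).mul ((Sm.uu j).mul ((Sm.uu j).mul sN)))
    have sB0 : ∀ j, Sm (fun w => uu j w * dd (ey j) f w) :=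
      fun j => (Sm.uu j).mul (hf'.dd _)
    have sB := Sm.sum sB0
    have sB' := (Sm.const (n := n) (4 * -1)).mul sB
    have sC := (Sm.const (n := n) (2 * (n : ℂ))).mul hf'
    rw [LL_add _ _ (sA.add sB') sC, LL_add _ _ sA sB', LL_cmul _ _ _ sB, LL_cmul _ _ _ hf',
      LL_sum _ _ sB0, LL_P ε hε ex 1 (by ring) hx sN]
    have : ∀ j, LL ε ex (fun w => uu j w * dd (ey j) f w) z
        = uu j z * dd (ey j) (LL ε ex f) z + 2 * (ε j * dd (ex j) (dd (ey j) f) z) := by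
      intro j
      rw [LL_uu ε ex 1 hx j (hf'.dd _), LL_dd _ _ _ hf']
      ring
    simp only [this, Finset.sum_add_distrib, ← Finset.mul_sum]
    ring
  have T2 : LL ε ey (fun w => ∑ i, dd (ex i) (fun u => uu i u * f u) w) z
      = (n : ℂ) * LL ε ey f z + (∑ j, uu j z * dd (ex j) (LL ε ey f) z)
        - 2 * (∑ j, ε j * dd (ex j) (dd (ey j) f) z) := by
    rw [LL_sum _ _ (fun i => ((Sm.uu i).mul hf').dd _)]
    have : ∀ j, LL ε ey (dd (ex j) (fun u => uu j u * f u)) z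
        = LL ε ey f z + uu j z * dd (ex j) (LL ε ey f) z
          - 2 * (ε j * dd (ex j) (dd (ey j) f) z) := by
      intro j
      rw [dd_uu _ _ hf', LL_add _ _ ((Sm.uu j).mul (hf'.dd _)) ((Sm.const _).mul hf'),
        LL_cmul _ _ _ hf', LL_uu ε ey (-1) hy j (hf'.dd _), LL_dd _ _ _ hf',
        dd_comm (ey j) _ hf', hx]
      simp only [if_true]
      ring
    simp only [this, Finset.sum_add_distrib, Finset.sum_sub_distrib, ← Finset.mul_sum]
    simp
  have T3 : LL ε ex (fun w => ∑ i, dd (ey i) (fun u => -1 * (uu i u * f u)) w) z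
      = (n : ℂ) * LL ε ex f z - (∑ j, uu j z * dd (ey j) (LL ε ex f) z)
        - 2 * (∑ j, ε j * dd (ex j) (dd (ey j) f) z) := by
    rw [LL_sum _ _ (fun i => ((Sm.const _).mul ((Sm.uu i).mul hf')).dd _)]
    have : ∀ j, LL ε ex (dd (ey j) (fun u => -1 * (uu j u * f u))) z
        = LL ε ex f z - uu j z * dd (ey j) (LL ε ex f) z
          - 2 * (ε j * dd (ex j) (dd (ey j) f) z) := by
      intro j
      rw [dd_cmul _ _ ((Sm.uu j).mul hf'), LL_cmul _ _ _ (((Sm.uu j).mul hf').dd _),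
        dd_uu _ _ hf', LL_add _ _ ((Sm.uu j).mul (hf'.dd _)) ((Sm.const _).mul hf'),
        LL_cmul _ _ _ hf', LL_uu ε ex 1 hx j (hf'.dd _), LL_dd _ _ _ hf', hy]
      simp only [if_true]
      ring
    simp only [this, Finset.sum_sub_distrib, ← Finset.mul_sum]
    simp
  rw [T1, T2, T3]
  simp only [← Finset.mul_sum]
  ring
end
end
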